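/- arXiv:1906.04098 — 4 statements merged into one kernel-verified Lean document; each statement's English description precedes it below -/
import Mathlib

section
/- Let β > 0, ω > 0 and u ∈ [0, β]. Then the family (indexed by η ∈ ℤ) of complex numbers e^{i (2π/β) η u} / ( ω² + ((2π/β) η)² ) is (unconditionally) summable, with sum equal to (β/(2ω)) · ( e^{-uω} + e^{-(β-u)ω} ) / ( 1 - e^{-βω} ). -/
theorem matsubara_aux (β ω : ℝ) (hβ : 0 < β) (hω : 0 < ω) (n : ℤ) :
    (1 / β) • ∫ x in (0:ℝ)..β, Complex.exp (-(Complex.I * ((2 * Real.pi / β : ℝ) : ℂ) * (n : ℂ) * (x : ℂ))) *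
      (((β / (2 * ω)) * (Real.exp (-x * ω) + Real.exp (-(β - x) * ω)) /
          (1 - Real.exp (-β * ω)) : ℝ) : ℂ) =
      1 / ((ω ^ 2 + (2 * Real.pi / β * (n : ℝ)) ^ 2 : ℝ) : ℂ) := by
  have hE : Real.exp (-β * ω) < 1 := Real.exp_lt_one_iff.mpr (by nlinarith [mul_pos hβ hω])
  have hE1 : (1 - Complex.exp (-β * ω)) ≠ 0 := by
    have : (1 - Real.exp (-β * ω)) ≠ 0 := by linarith
    exact_mod_cast this
  have hω' : (ω : ℂ) ≠ 0 := by exact_mod_cast hω.ne'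
  have hβ' : (β : ℂ) ≠ 0 := by exact_mod_cast hβ.ne'
  obtain ⟨c, hc⟩ : ∃ c : ℝ, c = 2 * Real.pi / β * (n : ℝ) := ⟨_, rfl⟩
  have hcβ : (c : ℂ) * β = n * (2 * Real.pi) := by
    have : c * β = n * (2 * Real.pi) := by rw [hc]; field_simp
    exact_mod_cast this
  obtain ⟨a, ha⟩ : ∃ a : ℂ, a = -ω - Complex.I * c := ⟨_, rfl⟩
  obtain ⟨b, hb⟩ : ∃ b : ℂ, b = ω - Complex.I * c := ⟨_, rfl⟩
  have ha0 : a ≠ 0 := by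
    intro h; have := congrArg Complex.re (ha.symm.trans h); simp at this; exact hω.ne' this
  have hb0 : b ≠ 0 := by
    intro h; have := congrArg Complex.re (hb.symm.trans h); simp at this; exact hω.ne' this
  have hper : Complex.exp (-(n * (2 * Real.pi * Complex.I))) = 1 := by
    rw [Complex.exp_neg, Complex.exp_int_mul_two_pi_mul_I, inv_one]
  have hea : Complex.exp (a * β) = Complex.exp (-β * ω) := by
    have : a * β = -β * ω + -(n * (2 * Real.pi * Complex.I)) := by
      rw [ha]; linear_combination (-Complex.I) * hcβ
    rw [this, Complex.exp_add, hper, mul_one]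
  have heb : Complex.exp (-β * ω) * Complex.exp (b * β) = 1 := by
    have : b * β = β * ω + -(n * (2 * Real.pi * Complex.I)) := by
      rw [hb]; linear_combination (-Complex.I) * hcβ
    rw [this, Complex.exp_add, hper, mul_one, ← Complex.exp_add]
    simp
  have hint : ∀ x : ℝ, Complex.exp (-(Complex.I * ((2 * Real.pi / β : ℝ) : ℂ) * (n : ℂ) * (x : ℂ))) *
      (((β / (2 * ω)) * (Real.exp (-x * ω) + Real.exp (-(β - x) * ω)) /
          (1 - Real.exp (-β * ω)) : ℝ) : ℂ) =
      (β / (2 * ω) / (1 - Complex.exp (-β * ω))) *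
        (Complex.exp (a * x) + Complex.exp (-β * ω) * Complex.exp (b * x)) := by
    intro x
    have hcc : (c : ℂ) = ((2 * Real.pi / β : ℝ) : ℂ) * n := by rw [hc]; push_cast; ring
    have e1 : Complex.exp (a * x) = Complex.exp (-(Complex.I * c * x)) * Complex.exp (-x * ω) := by
      rw [← Complex.exp_add, ha]; congr 1; ring
    have e2 : Complex.exp (-β * ω) * Complex.exp (b * x) =
        Complex.exp (-(Complex.I * c * x)) * Complex.exp (-(β - x) * ω) := by
      rw [← Complex.exp_add, ← Complex.exp_add, hb]; congr 1; ring
    rw [e1, e2, mul_assoc Complex.I, ← hcc]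
    push_cast
    ring
  simp_rw [hint]
  rw [intervalIntegral.integral_const_mul, intervalIntegral.integral_add
    (Continuous.intervalIntegrable (by fun_prop) _ _)
    (Continuous.intervalIntegrable (by fun_prop) _ _), intervalIntegral.integral_const_mul,
    integral_exp_mul_complex ha0, integral_exp_mul_complex hb0, hea, ← hc]
  have hab : ((ω ^ 2 + c ^ 2 : ℝ) : ℂ) = -(a * b) := by
    rw [ha, hb]; push_cast; linear_combination ((c:ℂ)^2) * Complex.I_sq
  have hs : (b - a) = 2 * ω := by rw [ha, hb]; ring
  rw [hab, Complex.real_smul]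
  have h3 : (Complex.exp (-β * ω) * ((Complex.exp (b * β) - Complex.exp (b * ((0:ℝ):ℂ))) / b)) =
      (1 - Complex.exp (-β * ω)) / b := by
    rw [← heb]; simp; ring
  rw [h3]
  have h4 : (Complex.exp (-β * ω) - Complex.exp (a * ((0:ℝ):ℂ))) / a + (1 - Complex.exp (-β * ω)) / b
      = (1 - Complex.exp (-β * ω)) * (2 * ω) * (1 / (-(a * b))) := by
    rw [← hs]; simp; field_simp; ring
  rw [h4]
  push_cast
  generalize 1 - Complex.exp (-β * ω) = D at hE1 ⊢
  field_simp

/-- Matsubara-frequency expansion of the Matsubara propagator at a single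
mode of energy `ω`: for `β > 0`, `ω > 0` and `u ∈ [0, β]`, the family
`η ↦ e^{i(2π/β)ηu} / (ω² + ((2π/β)η)²)` is unconditionally summable with sum
`(β/(2ω)) (e^{-uω} + e^{-(β-u)ω}) / (1 - e^{-βω})`. -/
theorem matsubara_sum (β ω u : ℝ) (hβ : 0 < β) (hω : 0 < ω) (hu : u ∈ Set.Icc 0 β) :
    HasSum (fun η : ℤ =>
        Complex.exp (Complex.I * ((2 * Real.pi / β : ℝ) : ℂ) * (η : ℂ) * (u : ℂ)) /
          ((ω ^ 2 + (2 * Real.pi / β * (η : ℝ)) ^ 2 : ℝ) : ℂ))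
      (((β / (2 * ω)) * (Real.exp (-u * ω) + Real.exp (-(β - u) * ω)) /
          (1 - Real.exp (-β * ω)) : ℝ) : ℂ) := by
  have : Fact (0 < β) := ⟨hβ⟩
  let g : ℝ → ℂ := fun x => (((β / (2 * ω)) * (Real.exp (-x * ω) + Real.exp (-(β - x) * ω)) /
          (1 - Real.exp (-β * ω)) : ℝ) : ℂ)
  have hg0 : g 0 = g β := by simp only [g]; congr 3; simp; ring
  have hgc : Continuous g := by simp only [g]; fun_prop
  let F : C(AddCircle β, ℂ) :=
    ⟨AddCircle.liftIco β 0 g, AddCircle.liftIco_zero_continuous hg0 hgc.continuousOn⟩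
  have hF : ∀ x ∈ Set.Ico 0 β, F (x : AddCircle β) = g x := by
    intro x hx
    have hx' : x ∈ Set.Ico 0 (0 + β) := by rwa [zero_add]
    exact AddCircle.liftIco_coe_apply (f := g) hx'
  have hcoef : ∀ n : ℤ, fourierCoeff F n =
      1 / ((ω ^ 2 + (2 * Real.pi / β * (n : ℝ)) ^ 2 : ℝ) : ℂ) := by
    intro n
    rw [← matsubara_aux β ω hβ hω n, fourierCoeff_eq_intervalIntegral _ _ 0, zero_add]
    congr 1
    refine intervalIntegral.integral_congr_Ioo_of_le hβ.le fun x hx => ?_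
    have : F (x : AddCircle β) = g x :=
      hF x (Set.Ioo_subset_Ico_self hx)
    simp only [this, g, smul_eq_mul, fourier_coe_apply]
    congr 2
    push_cast
    ring
  have hsum : Summable (fourierCoeff F) := by
    have h2 : Summable fun n : ℤ => (2 * Real.pi / β) ^ (-2 : ℤ) * (1 / (n : ℝ) ^ 2) :=
      (Real.summable_one_div_int_pow.mpr one_lt_two).mul_left _
    refine Summable.of_norm_bounded_eventually h2 ?_
    have : ∀ᶠ n : ℤ in Filter.cofinite, n ≠ 0 :=
      (Set.finite_singleton (0 : ℤ)).compl_mem_cofinite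
    filter_upwards [this] with n hn
    have hn' : (n : ℝ) ≠ 0 := by exact_mod_cast hn
    have hp : 0 < (2 * Real.pi / β * (n : ℝ)) ^ 2 := by
      have := Real.pi_pos
      positivity
    rw [hcoef, norm_div, norm_one, Complex.norm_real, Real.norm_of_nonneg (by positivity)]
    calc _ ≤ 1 / (2 * Real.pi / β * (n : ℝ)) ^ 2 :=
          one_div_le_one_div_of_le hp (by nlinarith [sq_nonneg ω])
      _ = _ := by rw [mul_pow, zpow_neg, one_div, mul_inv, one_div]; norm_cast
  have key := has_pointwise_sum_fourier_series_of_summable hsum (u : AddCircle β)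
  have hFu : F (u : AddCircle β) = g u := by
    rcases hu.2.lt_or_eq with h | h
    · exact hF u ⟨hu.1, h⟩
    · have h0 : F ((0 : ℝ) : AddCircle β) = g 0 :=
        hF 0 ⟨le_rfl, hβ⟩
      rw [h, ← hg0, ← h0]
      congr 1
      rw [AddCircle.coe_period]; rfl
  rw [hFu] at key
  convert key using 2 with n
  rw [hcoef, fourier_coe_apply, smul_eq_mul, div_eq_mul_one_div, mul_comm]
  congr 2
  push_cast
  ring
end

section
/- Let β > 0, ω > 0 and u ∈ (0, β). Then the symmetric partial sums Σ_{η=-N}^{N} e^{i (2π/β) η u} / ( β ( ω + i (2π/β) η ) ) converge, as N → ∞, to e^{-uω} / ( 1 - e^{-βω} ). -/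
open Filter

noncomputable def mcoef (a : ℝ) (n : ℤ) : ℂ := 1 / ((a : ℂ) + 2 * Real.pi * Complex.I * n)

lemma mden_ne {a : ℝ} (ha : 0 < a) (n : ℤ) : (a : ℂ) + 2 * Real.pi * Complex.I * n ≠ 0 := by
  intro h
  have := congrArg Complex.re h
  simp at this
  exact ha.ne' this

lemma mcoef_bound {a : ℝ} (n : ℤ) (hn : n ≠ 0) : ‖mcoef a n‖ ≤ 1 / |(n : ℝ)| := by
  have hn' : (0 : ℝ) < |(n : ℝ)| := by positivity
  rw [mcoef, norm_div, norm_one]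
  apply one_div_le_one_div_of_le hn'
  have h := Complex.abs_im_le_norm ((a : ℂ) + 2 * Real.pi * Complex.I * n)
  refine le_trans ?_ h
  simp [abs_mul]
  have := Real.pi_gt_three
  rw [abs_of_pos Real.pi_pos]
  nlinarith

lemma mcoef_sq_summable (a : ℝ) : Summable (fun n : ℤ => ‖mcoef a n‖ ^ 2) := by
  refine Summable.of_norm_bounded_eventually
    (Real.summable_one_div_int_pow (p := 2).mpr (by norm_num)) ?_
  filter_upwards [(Set.finite_singleton (0 : ℤ)).compl_mem_cofinite] with n hn
  have hn : n ≠ 0 := by simpa using hn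
  have := mcoef_bound (a := a) n hn
  rw [norm_pow, norm_norm]
  calc ‖mcoef a n‖ ^ 2 ≤ (1 / |(n : ℝ)|) ^ 2 := by gcongr
    _ = _ := by rw [div_pow, sq_abs, one_pow]

lemma mcoef_tendsto (a : ℝ) : Tendsto (fun n : ℤ => ‖mcoef a n‖) cofinite (nhds 0) := by
  have := (mcoef_sq_summable a).tendsto_cofinite_zero.sqrt
  simpa [Real.sqrt_sq] using this

lemma mdiff_summable {a : ℝ} (ha : 0 < a) :
    Summable (fun n : ℤ => mcoef a (n - 1) - mcoef a n) := by
  have h1 := mcoef_sq_summable a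
  have h2 : Summable (fun n : ℤ => ‖mcoef a (n - 1)‖ ^ 2) :=
    (Equiv.subRight (1 : ℤ)).summable_iff.mpr h1
  refine Summable.of_norm_bounded ((h1.add h2).mul_left (2 * Real.pi)) fun n => ?_
  have e : mcoef a (n - 1) - mcoef a n =
      2 * Real.pi * Complex.I * (mcoef a (n - 1) * mcoef a n) := by
    have h3 := mden_ne ha n
    have h4 := mden_ne ha (n - 1)
    unfold mcoef
    field_simp
    push_cast
    ring
  rw [e]
  simp only [norm_mul, Complex.norm_I, Complex.norm_real, Complex.norm_ofNat, mul_one,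
    Real.norm_eq_abs, abs_of_pos Real.pi_pos]
  have := Real.pi_pos
  gcongr
  nlinarith [sq_nonneg (‖mcoef a (n - 1)‖ - ‖mcoef a n‖), sq_nonneg (‖mcoef a (n - 1)‖),
    sq_nonneg (‖mcoef a n‖)]

lemma mparts (c : ℤ → ℂ) (z : ℂ) (hz : z ≠ 0) (N : ℕ) :
    ∑ n ∈ Finset.Icc (-(N : ℤ)) N, (c (n - 1) - c n) * z ^ n =
      (z - 1) * ∑ n ∈ Finset.Icc (-(N : ℤ)) N, c n * z ^ n
        + c (-N - 1) * z ^ (-(N : ℤ)) - c N * z ^ ((N : ℤ) + 1) := by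
  induction N with
  | zero => simp; ring
  | succ N ih =>
    push_cast
    rw [Finset.sum_Icc_succ_eq_add_endpoints, Finset.sum_Icc_succ_eq_add_endpoints, ih]
    have e1 : z ^ (-(N : ℤ)) = z ^ (-((N : ℤ) + 1)) * z := by
      rw [← zpow_add_one₀ hz]; congr 1; ring
    have e2 : z ^ ((N : ℤ) + 1 + 1) = z ^ ((N : ℤ) + 1) * z := zpow_add_one₀ hz _
    rw [e1, e2]
    have e3 : ((N : ℤ) + 1 - 1) = N := by ring
    have e4 : (-(N : ℤ) - 1) = -((N : ℤ) + 1) := by ring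
    rw [e3, e4]
    ring

noncomputable def mg (a : ℝ) (x : ℝ) : ℂ :=
  (Complex.exp (2 * Real.pi * Complex.I * x) - 1) * Complex.exp (-a * x) / (1 - Complex.exp (-a))

lemma mexp_ne {a : ℝ} (ha : 0 < a) : (1 : ℂ) - Complex.exp (-a) ≠ 0 := by
  have : Real.exp (-a) < 1 := by simpa using ha
  have h : (1 : ℝ) - Real.exp (-a) ≠ 0 := by linarith
  exact_mod_cast h

lemma mint {a : ℝ} (ha : 0 < a) (n : ℤ) :
    ∫ x in (0 : ℝ)..1, Complex.exp (-((a : ℂ) + 2 * Real.pi * Complex.I * n) * x) =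
      (1 - Complex.exp (-a)) * mcoef a n := by
  have h := mden_ne ha n
  rw [integral_exp_mul_complex (neg_ne_zero.mpr h)]
  have : Complex.exp (-((a : ℂ) + 2 * Real.pi * Complex.I * n)) = Complex.exp (-a) := by
    rw [Complex.exp_eq_exp_iff_exists_int]
    exact ⟨-n, by push_cast; ring⟩
  simp only [Complex.ofReal_one, mul_one, Complex.ofReal_zero, mul_zero, Complex.exp_zero, this]
  unfold mcoef
  field_simp
  ring

lemma mcoeff_eq {a : ℝ} (ha : 0 < a) (n : ℤ) :
    fourierCoeff (AddCircle.liftIco (1 : ℝ) 0 (mg a)) n = mcoef a (n - 1) - mcoef a n := by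
  rw [fourierCoeff_liftIco_eq, fourierCoeffOn_eq_integral]
  have hne := mexp_ne ha
  have key : ∀ x : ℝ, fourier (-n) (x : AddCircle (0 + 1 - 0 : ℝ)) • mg a x =
      (1 / (1 - Complex.exp (-a))) *
      (Complex.exp (-((a : ℂ) + 2 * Real.pi * Complex.I * (n - 1 : ℤ)) * x) -
        Complex.exp (-((a : ℂ) + 2 * Real.pi * Complex.I * n) * x)) := by
    intro x
    rw [fourier_coe_apply, mg, smul_eq_mul]
    have e1 : Complex.exp (-((a : ℂ) + 2 * Real.pi * Complex.I * (n - 1 : ℤ)) * x) =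
      Complex.exp (2 * Real.pi * Complex.I * (-n : ℤ) * x / (0 + 1 - 0 : ℝ)) *
        Complex.exp (2 * Real.pi * Complex.I * x) * Complex.exp (-a * x) := by
      rw [← Complex.exp_add, ← Complex.exp_add]; congr 1; push_cast; ring
    have e2 : Complex.exp (-((a : ℂ) + 2 * Real.pi * Complex.I * n) * x) =
      Complex.exp (2 * Real.pi * Complex.I * (-n : ℤ) * x / (0 + 1 - 0 : ℝ)) *
        Complex.exp (-a * x) := by
      rw [← Complex.exp_add]; congr 1; push_cast; ring
    rw [e1, e2]
    ring
  simp_rw [key]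
  rw [intervalIntegral.integral_const_mul, zero_add, intervalIntegral.integral_sub, mint ha,
    mint ha]
  · simp
    field_simp
  · exact Continuous.intervalIntegrable (by fun_prop) _ _
  · exact Continuous.intervalIntegrable (by fun_prop) _ _

lemma mg_cont (a : ℝ) : Continuous (AddCircle.liftIco (1 : ℝ) 0 (mg a)) := by
  apply AddCircle.liftIco_zero_continuous
  · simp [mg, Complex.exp_two_pi_mul_I]
  · unfold mg
    fun_prop

lemma mhasSum {a x : ℝ} (ha : 0 < a) (hx : x ∈ Set.Ioo (0 : ℝ) 1) :
    HasSum (fun n : ℤ => (mcoef a (n - 1) - mcoef a n) *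
      Complex.exp (2 * Real.pi * Complex.I * x) ^ n) (mg a x) := by
  let B : C(UnitAddCircle, ℂ) := ⟨_, mg_cont a⟩
  have s1 : ∀ n : ℤ, fourierCoeff B n = mcoef a (n - 1) - mcoef a n := mcoeff_eq ha
  have s2 := has_pointwise_sum_fourier_series_of_summable
    ((mdiff_summable ha).congr fun n => (s1 n).symm) (x : UnitAddCircle)
  simp_rw [s1] at s2
  convert s2 using 1
  · ext n
    rw [smul_eq_mul, fourier_coe_apply, ← Complex.exp_int_mul]
    congr 2
    push_cast
    ring
  · exact (AddCircle.liftIco_coe_apply (show x ∈ Set.Ico (0 : ℝ) (0 + 1) by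
      rw [zero_add]; exact ⟨hx.1.le, hx.2⟩)).symm

lemma mz_ne {x : ℝ} (hx : x ∈ Set.Ioo (0 : ℝ) 1) :
    Complex.exp (2 * Real.pi * Complex.I * x) - 1 ≠ 0 := by
  intro h
  rw [sub_eq_zero, Complex.exp_eq_one_iff] at h
  obtain ⟨n, hn⟩ := h
  have h2 : (2 * Real.pi * Complex.I : ℂ) * x = (2 * Real.pi * Complex.I) * n := by
    rw [hn]; ring
  have h3 := mul_left_cancel₀ Complex.two_pi_I_ne_zero h2
  have h4 : x = n := by exact_mod_cast h3
  have h5 := hx.1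
  have h6 := hx.2
  rw [h4] at h5 h6
  have h7 : 0 < n := by exact_mod_cast h5
  have h8 : n < 1 := by exact_mod_cast h6
  omega

lemma mmain {a x : ℝ} (ha : 0 < a) (hx : x ∈ Set.Ioo (0 : ℝ) 1) :
    Tendsto (fun N : ℕ => ∑ n ∈ Finset.Icc (-(N : ℤ)) N,
      mcoef a n * Complex.exp (2 * Real.pi * Complex.I * x) ^ n) atTop
      (nhds (Complex.exp (-a * x) / (1 - Complex.exp (-a)))) := by
  have hz := mz_ne hx
  have hs := (mhasSum ha hx).comp Finset.tendsto_Icc_neg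
  have hz1 : ‖Complex.exp (2 * Real.pi * Complex.I * x)‖ = 1 := by
    rw [Complex.norm_exp]; simp
  have hz0 := Complex.exp_ne_zero (2 * Real.pi * Complex.I * x)
  set z := Complex.exp (2 * Real.pi * Complex.I * x) with hzdef
  have t1 : Tendsto (fun N : ℕ => mcoef a (-(N : ℤ) - 1) * z ^ (-(N : ℤ))) atTop (nhds 0) := by
    rw [tendsto_zero_iff_norm_tendsto_zero]
    simp only [norm_mul, norm_zpow, hz1, one_zpow, mul_one]
    refine (mcoef_tendsto a).comp ?_
    rw [← Nat.cofinite_eq_atTop]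
    exact Function.Injective.tendsto_cofinite (fun p q h => by simpa using h)
  have t2 : Tendsto (fun N : ℕ => mcoef a (N : ℤ) * z ^ ((N : ℤ) + 1)) atTop (nhds 0) := by
    rw [tendsto_zero_iff_norm_tendsto_zero]
    simp only [norm_mul, norm_zpow, hz1, one_zpow, mul_one]
    refine (mcoef_tendsto a).comp ?_
    rw [← Nat.cofinite_eq_atTop]
    exact Function.Injective.tendsto_cofinite (fun p q h => by simpa using h)
  have t3 := ((hs.sub t1).add t2).const_mul (1 / (z - 1))
  convert t3 using 1
  · ext N
    simp only [Function.comp_apply]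
    rw [mparts _ _ hz0]
    field_simp
    ring
  · rw [mg, ← hzdef]
    congr 1
    field_simp
    ring

/-- Fourier-series expansion in imaginary time of a single positive-frequency
mode of the thermal two-point function: for `β > 0`, `ω > 0` and `u ∈ (0, β)`, the
symmetric partial sums `Σ_{η=-N}^{N} e^{i(2π/β)ηu} / (β(ω + i(2π/β)η))` converge to
`e^{-uω} / (1 - e^{-βω})` as `N → ∞`. -/
theorem matsubara_symmetric_partial_sums (β ω u : ℝ) (hβ : 0 < β) (hω : 0 < ω)
    (hu : u ∈ Set.Ioo 0 β) :
    Tendsto (fun N : ℕ =>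
        ∑ η ∈ Finset.Icc (-(N : ℤ)) (N : ℤ),
          Complex.exp (Complex.I * ((2 * Real.pi / β : ℝ) : ℂ) * (η : ℂ) * (u : ℂ)) /
            ((β : ℂ) * ((ω : ℂ) + Complex.I * ((2 * Real.pi / β : ℝ) : ℂ) * (η : ℂ))))
      atTop (nhds ((Real.exp (-u * ω) / (1 - Real.exp (-β * ω)) : ℝ) : ℂ)) := by
  have hx : u / β ∈ Set.Ioo (0 : ℝ) 1 :=
    ⟨div_pos hu.1 hβ, (div_lt_one hβ).mpr hu.2⟩
  have hβ' : (β : ℂ) ≠ 0 := by exact_mod_cast hβ.ne'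
  have h := mmain (mul_pos hβ hω) hx
  convert h using 1
  · ext N
    refine Finset.sum_congr rfl fun n _ => ?_
    rw [mcoef, ← Complex.exp_int_mul, one_div_mul_eq_div]
    congr 1
    · congr 1
      push_cast
      field_simp
    · push_cast
      field_simp
  · push_cast
    congr 3
    · field_simp
    · ring_nf
end

section
/- Let m > 0 and let h : ℝ³ → ℂ be Lebesgue integrable. Then ∫_{ℝ³} e^{i t w(p)} h(p) dp → 0 as t → +∞ (and likewise as t → -∞). -/
open MeasureTheory Filter


lemma rl_aux_null (m : ℝ) (S : Set ℝ) (hS : volume S = 0) :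
    volume {r : ℝ | 0 < r ∧ Real.sqrt (r ^ 2 + m ^ 2) ∈ S} = 0 := by
  have h1 : volume ((fun s : ℝ => Real.sqrt (s ^ 2 - m ^ 2)) '' (S ∩ {s | 0 < s ^ 2 - m ^ 2})) = 0 := by
    apply addHaar_image_eq_zero_of_differentiableOn_of_addHaar_eq_zero
    · intro s hs
      have : s ^ 2 - m ^ 2 ≠ 0 := ne_of_gt hs.2
      apply DifferentiableAt.differentiableWithinAt
      exact DifferentiableAt.sqrt (by fun_prop) this
    · exact measure_mono_null Set.inter_subset_left hS
  refine measure_mono_null ?_ h1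
  rintro r ⟨hr, hrS⟩
  have e : Real.sqrt (r ^ 2 + m ^ 2) ^ 2 = r ^ 2 + m ^ 2 := Real.sq_sqrt (by positivity)
  refine ⟨_, ⟨hrS, ?_⟩, ?_⟩
  · simp only [Set.mem_ofPred_eq, e]
    have : 0 < r ^ 2 := by positivity
    linarith
  · simp only [e, add_sub_cancel_right]
    exact Real.sqrt_sq hr.le

lemma rl_aux_ac (m : ℝ) :
    (volume : Measure (EuclideanSpace ℝ (Fin 3))).map
      (fun p => Real.sqrt (‖p‖ ^ 2 + m ^ 2)) ≪ volume := by
  have hw : Measurable (fun p : EuclideanSpace ℝ (Fin 3) => Real.sqrt (‖p‖ ^ 2 + m ^ 2)) := by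
    fun_prop
  refine Measure.AbsolutelyContinuous.mk fun S hSm hS => ?_
  rw [Measure.map_apply hw hSm]
  set T : Set ℝ := {r : ℝ | 0 < r ∧ Real.sqrt (r ^ 2 + m ^ 2) ∈ S} with hT
  have hT0 : volume T = 0 := rl_aux_null m S hS
  set f : ℝ → ℝ := T.indicator 1 with hf
  have hf0 : ∀ᵐ y : ℝ, f y = 0 := by
    filter_upwards [measure_eq_zero_iff_ae_notMem.1 hT0] with y hy
    exact Set.indicator_of_notMem hy _
  have hz : (fun y : ℝ => y ^ (Module.finrank ℝ (EuclideanSpace ℝ (Fin 3)) - 1) • f y)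
      =ᵐ[volume.restrict (Set.Ioi 0)] fun _ => (0 : ℝ) := by
    filter_upwards [ae_restrict_of_ae hf0] with y hy
    rw [hy, smul_zero]
  have hint : Integrable (fun p : EuclideanSpace ℝ (Fin 3) => f ‖p‖) := by
    rw [integrable_fun_norm_addHaar volume]
    exact (integrable_zero _ _ _).congr hz.symm
  have hI : ∫ p : EuclideanSpace ℝ (Fin 3), f ‖p‖ = 0 := by
    rw [integral_fun_norm_addHaar volume f, integral_congr_ae hz]
    simp
  have hnn : ∀ y, 0 ≤ f y := fun y => Set.indicator_nonneg (fun _ _ => zero_le_one) y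
  rw [integral_eq_zero_iff_of_nonneg (fun p => hnn _) hint] at hI
  rw [measure_eq_zero_iff_ae_notMem]
  filter_upwards [hI, Measure.ae_ne volume (0 : EuclideanSpace ℝ (Fin 3))] with p hp hp0 hpS
  have hmem : ‖p‖ ∈ T := ⟨norm_pos_iff.2 hp0, hpS⟩
  simp [hf, Set.indicator_of_mem hmem] at hp

lemma rl_aux_meas (ν : Measure ℝ) [IsFiniteMeasure ν] (hν : ν ≪ volume) :
    Tendsto (fun t : ℝ => ∫ x, Complex.exp (Complex.I * (t : ℂ) * (x : ℂ)) ∂ν)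
      (cocompact ℝ) (nhds 0) := by
  have h1 := Real.tendsto_integral_exp_smul_cocompact
    (fun x : ℝ => (((ν.rnDeriv volume x).toReal : ℝ) : ℂ))
  have hc : Tendsto (fun t : ℝ => t * (-(2 * Real.pi)⁻¹)) (cocompact ℝ) (cocompact ℝ) := by
    have : -(2 * Real.pi)⁻¹ ≠ 0 := by
      exact neg_ne_zero.2 (inv_ne_zero (by positivity))
    exact (Homeomorph.mulRight₀ _ this).isClosedEmbedding.tendsto_cocompact
  refine (h1.comp hc).congr fun t => ?_
  rw [← integral_rnDeriv_smul hν]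
  simp only [Function.comp]
  refine integral_congr_ae (ae_of_all _ fun x => ?_)
  simp only [Circle.smul_def, Real.fourierChar_apply, smul_eq_mul, Complex.real_smul]
  rw [mul_comm]
  congr 2
  have : (Real.pi : ℂ) ≠ 0 := by exact_mod_cast Real.pi_ne_zero
  push_cast
  field_simp

lemma rl_aux_nonneg (m : ℝ) (g : EuclideanSpace ℝ (Fin 3) → ℝ) (hg : Integrable g)
    (h0 : ∀ p, 0 ≤ g p) :
    Tendsto (fun t : ℝ => ∫ p : EuclideanSpace ℝ (Fin 3),
        Complex.exp (Complex.I * (t : ℂ) * (Real.sqrt (‖p‖ ^ 2 + m ^ 2) : ℂ)) * (g p : ℂ))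
      (cocompact ℝ) (nhds 0) := by
  have hw : Measurable (fun p : EuclideanSpace ℝ (Fin 3) => Real.sqrt (‖p‖ ^ 2 + m ^ 2)) := by
    fun_prop
  set ν := (volume.withDensity fun p => ENNReal.ofReal (g p)) with hν
  have : IsFiniteMeasure ν := isFiniteMeasure_withDensity_ofReal hg.2
  have hac : ν.map (fun p => Real.sqrt (‖p‖ ^ 2 + m ^ 2)) ≪ volume :=
    ((withDensity_absolutelyContinuous _ _).map hw).trans (rl_aux_ac m)
  refine (rl_aux_meas _ hac).congr fun t => ?_
  rw [integral_map hw.aemeasurable (by fun_prop), hν,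
    integral_withDensity_eq_integral_toReal_smul₀ hg.1.aemeasurable.ennreal_ofReal (by simp)]
  refine integral_congr_ae (ae_of_all _ fun p => ?_)
  simp only [ENNReal.toReal_ofReal (h0 p), Complex.real_smul]
  rw [mul_comm]

lemma rl_aux_integrable (m t : ℝ) (g : EuclideanSpace ℝ (Fin 3) → ℂ) (hg : Integrable g) :
    Integrable fun p : EuclideanSpace ℝ (Fin 3) =>
      Complex.exp (Complex.I * (t : ℂ) * (Real.sqrt (‖p‖ ^ 2 + m ^ 2) : ℂ)) * g p := by
  refine hg.bdd_mul (c := 1) (by fun_prop) (ae_of_all _ fun p => ?_)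
  rw [Complex.norm_exp]
  simp

lemma rl_aux_integrable_real (m t : ℝ) (g : EuclideanSpace ℝ (Fin 3) → ℝ) (hg : Integrable g) :
    Integrable fun p : EuclideanSpace ℝ (Fin 3) =>
      Complex.exp (Complex.I * (t : ℂ) * (Real.sqrt (‖p‖ ^ 2 + m ^ 2) : ℂ)) * (g p : ℂ) :=
  rl_aux_integrable m t _ hg.ofReal

lemma rl_aux_real (m : ℝ) (g : EuclideanSpace ℝ (Fin 3) → ℝ) (hg : Integrable g) :
    Tendsto (fun t : ℝ => ∫ p : EuclideanSpace ℝ (Fin 3),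
        Complex.exp (Complex.I * (t : ℂ) * (Real.sqrt (‖p‖ ^ 2 + m ^ 2) : ℂ)) * (g p : ℂ))
      (cocompact ℝ) (nhds 0) := by
  have hp := rl_aux_nonneg m _ hg.pos_part (fun p => le_max_right _ _)
  have hn := rl_aux_nonneg m _ hg.neg_part (fun p => le_max_right _ _)
  have := hp.sub hn
  rw [sub_zero] at this
  refine this.congr fun t => ?_
  rw [← integral_sub (rl_aux_integrable_real m t _ hg.pos_part)
    (rl_aux_integrable_real m t _ hg.neg_part)]
  refine integral_congr_ae (ae_of_all _ fun p => ?_)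
  simp only [← mul_sub, ← Complex.ofReal_sub]
  congr 2
  rcases le_total 0 (g p) with h | h <;> simp [h]

lemma rl_aux_complex (m : ℝ) (h : EuclideanSpace ℝ (Fin 3) → ℂ) (hh : Integrable h) :
    Tendsto (fun t : ℝ => ∫ p : EuclideanSpace ℝ (Fin 3),
        Complex.exp (Complex.I * (t : ℂ) * (Real.sqrt (‖p‖ ^ 2 + m ^ 2) : ℂ)) * h p)
      (cocompact ℝ) (nhds 0) := by
  have hr := rl_aux_real m _ hh.re
  have hi := rl_aux_real m _ hh.im
  have := hr.add (hi.mul_const Complex.I)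
  rw [zero_mul, zero_add] at this
  refine this.congr fun t => ?_
  rw [← integral_mul_const, ← integral_add (rl_aux_integrable_real m t _ hh.re)
    ((rl_aux_integrable_real m t _ hh.im).mul_const Complex.I)]
  refine integral_congr_ae (ae_of_all _ fun p => ?_)
  simp only [mul_assoc, ← mul_add]
  congr 1
  exact Complex.re_add_im (h p)

/-- Riemann–Lebesgue-type statement: for `m > 0` and `h` integrable on `ℝ³`,
`∫ e^{i t w(p)} h(p) dp → 0` as `t → +∞` and as `t → -∞`, where `w(p) = √(|p|² + m²)`. -/
theorem riemann_lebesgue_massive_shell (m : ℝ) (hm : 0 < m)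
    (h : EuclideanSpace ℝ (Fin 3) → ℂ) (hh : Integrable h) :
    Tendsto (fun t : ℝ => ∫ p : EuclideanSpace ℝ (Fin 3),
        Complex.exp (Complex.I * (t : ℂ) * (Real.sqrt (‖p‖ ^ 2 + m ^ 2) : ℂ)) * h p)
      atTop (nhds 0) ∧
    Tendsto (fun t : ℝ => ∫ p : EuclideanSpace ℝ (Fin 3),
        Complex.exp (Complex.I * (t : ℂ) * (Real.sqrt (‖p‖ ^ 2 + m ^ 2) : ℂ)) * h p)
      atBot (nhds 0) := by
  have := rl_aux_complex m h hh
  exact ⟨this.mono_left atTop_le_cocompact, this.mono_left atBot_le_cocompact⟩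
end

section
/- Let β > 0 and m > 0. Then the function p ↦ ( b₊(w(p))² / (4 w(p)²) ) · β e^{-β w(p)} is integrable on ℝ³ and its integral I = ∫_{ℝ³} ( b₊(w(p))² / (4 w(p)²) ) β e^{-β w(p)} dp satisfies 0 < I < ∞. In particular the large-time limit of the correction B̂^{[1]} evaluated at coinciding points is nonzero. -/
open MeasureTheory

/-- the function `p ↦ (b₊(w(p))²/(4w(p)²)) β e^{-βw(p)}` is integrable on
`ℝ³` with strictly positive (finite) integral; in particular the large-time limit of the
correction `B̂^{[1]}` at coinciding points is nonzero. -/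
theorem Bhat_coinciding_points_positive (β m : ℝ) (hβ : 0 < β) (hm : 0 < m) :
    Integrable (fun p : EuclideanSpace ℝ (Fin 3) =>
        (1 - Real.exp (-β * Real.sqrt (‖p‖ ^ 2 + m ^ 2)))⁻¹ ^ 2 /
            (4 * Real.sqrt (‖p‖ ^ 2 + m ^ 2) ^ 2) *
          (β * Real.exp (-β * Real.sqrt (‖p‖ ^ 2 + m ^ 2)))) ∧
      0 < ∫ p : EuclideanSpace ℝ (Fin 3),
        (1 - Real.exp (-β * Real.sqrt (‖p‖ ^ 2 + m ^ 2)))⁻¹ ^ 2 /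
            (4 * Real.sqrt (‖p‖ ^ 2 + m ^ 2) ^ 2) *
          (β * Real.exp (-β * Real.sqrt (‖p‖ ^ 2 + m ^ 2))) := by
  have hw : ∀ p : EuclideanSpace ℝ (Fin 3), m ≤ Real.sqrt (‖p‖ ^ 2 + m ^ 2) := fun p =>
    Real.le_sqrt_of_sq_le (by nlinarith [sq_nonneg ‖p‖])
  have hwp : ∀ p : EuclideanSpace ℝ (Fin 3), ‖p‖ ≤ Real.sqrt (‖p‖ ^ 2 + m ^ 2) := fun p =>
    Real.le_sqrt_of_sq_le (by nlinarith [sq_nonneg m])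
  have hK : 0 < 1 - Real.exp (-β * m) := by
    have : Real.exp (-β * m) < 1 := Real.exp_lt_one_iff.2 (by nlinarith [mul_pos hβ hm])
    linarith
  have hle : ∀ w : ℝ, m ≤ w → 1 - Real.exp (-β * m) ≤ 1 - Real.exp (-β * w) := by
    intro w h
    have : Real.exp (-β * w) ≤ Real.exp (-β * m) := Real.exp_le_exp.2 (by nlinarith)
    linarith
  have hpos : ∀ p : EuclideanSpace ℝ (Fin 3),
      0 < (1 - Real.exp (-β * Real.sqrt (‖p‖ ^ 2 + m ^ 2)))⁻¹ ^ 2 /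
            (4 * Real.sqrt (‖p‖ ^ 2 + m ^ 2) ^ 2) *
          (β * Real.exp (-β * Real.sqrt (‖p‖ ^ 2 + m ^ 2))) := by
    intro p
    have h1 := hw p
    have h2 := hle _ h1
    have h3 : 0 < Real.sqrt (‖p‖ ^ 2 + m ^ 2) := by linarith
    have h4 : 0 < 1 - Real.exp (-β * Real.sqrt (‖p‖ ^ 2 + m ^ 2)) := by linarith
    positivity
  have hint : Integrable (fun p : EuclideanSpace ℝ (Fin 3) =>
        (1 - Real.exp (-β * Real.sqrt (‖p‖ ^ 2 + m ^ 2)))⁻¹ ^ 2 /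
            (4 * Real.sqrt (‖p‖ ^ 2 + m ^ 2) ^ 2) *
          (β * Real.exp (-β * Real.sqrt (‖p‖ ^ 2 + m ^ 2)))) := by
    have hb : Integrable (fun p : EuclideanSpace ℝ (Fin 3) => (1 + ‖p‖) ^ (-(4 : ℝ))) :=
      integrable_one_add_norm (by simp; norm_num)
    refine (hb.const_mul ((1 - Real.exp (-β * m))⁻¹ ^ 2 / (4 * m ^ 2) *
      (β * (Real.exp β * (24 / β ^ 4))))).mono' (Measurable.aestronglyMeasurable (by fun_prop)) ?_
    refine Filter.Eventually.of_forall fun p => ?_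
    rw [Real.norm_of_nonneg (hpos p).le]
    have h1 := hw p
    have h5 := hwp p
    have h2 := hle _ h1
    have hp := norm_nonneg p
    have he : Real.exp (-β * Real.sqrt (‖p‖ ^ 2 + m ^ 2)) ≤
        Real.exp β * (24 / β ^ 4) * (1 + ‖p‖) ^ (-(4 : ℝ)) := by
      have hr : (1 + ‖p‖) ^ (-(4 : ℝ)) = ((1 + ‖p‖) ^ 4)⁻¹ := by
        rw [Real.rpow_neg (by positivity)]
        norm_cast
      have h6 : (β * (1 + ‖p‖)) ^ 4 / 24 ≤ Real.exp (β * (1 + ‖p‖)) := by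
        have := Real.pow_div_factorial_le_exp (β * (1 + ‖p‖)) (by positivity) 4
        norm_num [Nat.factorial] at this ⊢
        exact this
      calc Real.exp (-β * Real.sqrt (‖p‖ ^ 2 + m ^ 2)) ≤ Real.exp (β - β * (1 + ‖p‖)) :=
            Real.exp_le_exp.2 (by nlinarith)
        _ = Real.exp β * (Real.exp (β * (1 + ‖p‖)))⁻¹ := by
            rw [Real.exp_sub, div_eq_mul_inv]
        _ ≤ Real.exp β * ((β * (1 + ‖p‖)) ^ 4 / 24)⁻¹ := by gcongr
        _ = _ := by rw [hr]; field_simp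
    rw [mul_assoc _ (β * _), mul_assoc β]
    gcongr
    exact inv_nonneg.2 (hK.le.trans h2)
  refine ⟨hint, ?_⟩
  rw [integral_pos_iff_support_of_nonneg (fun p => (hpos p).le) hint]
  have : (Function.support fun p : EuclideanSpace ℝ (Fin 3) =>
        (1 - Real.exp (-β * Real.sqrt (‖p‖ ^ 2 + m ^ 2)))⁻¹ ^ 2 /
            (4 * Real.sqrt (‖p‖ ^ 2 + m ^ 2) ^ 2) *
          (β * Real.exp (-β * Real.sqrt (‖p‖ ^ 2 + m ^ 2)))) = Set.univ :=
    Set.eq_univ_of_forall fun p => (hpos p).ne'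
  rw [this]
  exact isOpen_univ.measure_pos _ Set.univ_nonempty
end
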